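/- Let S and A be nonempty finite sets. For every θ, u, v, w ∈ ℝ^{S×A} and every (s,a) ∈ S×A, the third directional derivative of θ ↦ π_θ(a|s) satisfies |d³π_θ[u,v,w](a|s)| ≤ 48·π_θ(a|s)·‖u‖_∞·‖v‖_∞·‖w‖_∞. -/

import Mathlib

open scoped BigOperators

/-- The softmax policy `π_θ(a|s) = exp θ(s,a) / Σ_{a'} exp θ(s,a')`. -/
noncomputable def softmax {S A : Type*} [Fintype A] (θ : S × A → ℝ) (s : S) (a : A) : ℝ :=
  Real.exp (θ (s, a)) / ∑ a' : A, Real.exp (θ (s, a'))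

/-!
Write `σ_a = ∇ log π_a` for the score at `a`. Then `∇π_a = π_a σ_a`, while `∇(σ_a v) = -C(v, ·)`
and `∇C(v, w) = κ(v, w, ·)`, where `C(v, w) = 𝔼[σ v · σ w]` is the Fisher information and
`κ(u, v, w) = 𝔼[σ u · σ v · σ w]`. Hence `d³π_a[u, v, w] / π_a` equals
`σ_a u σ_a v σ_a w - σ_a u C(v, w) - σ_a v C(u, w) - σ_a w C(u, v) - κ(u, v, w)`.
Since `|σ_b u| ≤ 2‖u‖` for all `b`, each of these five terms is at most `8 ‖u‖ ‖v‖ ‖w‖`, and the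
policy satisfies the bound with `40`. Nothing changes when the logits `θ(s, ·)` are replaced by
arbitrary linear functionals of a parameter.
-/

theorem iteratedFDeriv_succ_apply_vecCons {𝕜 E F : Type*} [NontriviallyNormedField 𝕜]
    [NormedAddCommGroup E] [NormedSpace 𝕜 E] [NormedAddCommGroup F] [NormedSpace 𝕜 F]
    {f g : E → F} {g' : E →L[𝕜] F} {n : ℕ} {m : Fin n → E} {x : E}
    (hf : DifferentiableAt 𝕜 (iteratedFDeriv 𝕜 n f) x)
    (hg : ∀ y, iteratedFDeriv 𝕜 n f y m = g y) (hg' : HasFDerivAt g g' x) (u : E) :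
    iteratedFDeriv 𝕜 (n + 1) f x (Matrix.vecCons u m) = g' u := by
  obtain rfl : (fun y => iteratedFDeriv 𝕜 n f y m) = g := funext hg
  rw [hf.iteratedFDeriv_succ_apply_left', ← hg'.fderiv]
  rfl

/-- The log-linear policy over a finite action set: the softmax of the logits `ℓ b θ`, which depend
linearly on the parameter `θ`. The tabular policy `softmax` at a state is the case where the logits
are coordinates of `θ`. -/
noncomputable def logLinearPolicy {ι E : Type*} [Fintype ι] [NormedAddCommGroup E]
    [NormedSpace ℝ E] (ℓ : ι → E →L[ℝ] ℝ) (θ : E) (a : ι) : ℝ :=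
  Real.exp (ℓ a θ) / ∑ b, Real.exp (ℓ b θ)

namespace logLinearPolicy

variable {ι E : Type*} [Fintype ι] [NormedAddCommGroup E] [NormedSpace ℝ E]
  (ℓ : ι → E →L[ℝ] ℝ) (θ u v w : E) (a : ι)

/-- The score `∇ log π_θ(a)` of a log-linear policy. -/
noncomputable def score : E →L[ℝ] ℝ :=
  ℓ a - ∑ b, logLinearPolicy ℓ θ b • ℓ b

/-- The expectation of `c · score` under the policy. By the policy gradient theorem it is the
derivative in `θ` of the expectation of a reward `c` that does not depend on `θ`. -/
noncomputable def policyGradient (c : ι → ℝ) : E →L[ℝ] ℝ :=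
  ∑ b, (logLinearPolicy ℓ θ b * c b) • score ℓ θ b

/-- The Fisher information `w ↦ 𝔼[score v · score w]` of a log-linear policy, partially applied to
its first argument. -/
noncomputable def fisherInformation : E →L[ℝ] ℝ :=
  policyGradient ℓ θ fun b => score ℓ θ b v

/-- The third cumulant `u ↦ 𝔼[score u · score v · score w]` of the score of a log-linear policy,
partially applied to two arguments. -/
noncomputable def thirdCumulant : E →L[ℝ] ℝ :=
  policyGradient ℓ θ fun b => score ℓ θ b v * score ℓ θ b w

section Simplex

variable [Nonempty ι]

theorem sum_exp_pos : 0 < ∑ b, Real.exp (ℓ b θ) :=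
  Finset.sum_pos (fun _ _ => Real.exp_pos _) Finset.univ_nonempty

theorem pos : 0 < logLinearPolicy ℓ θ a :=
  div_pos (Real.exp_pos _) (sum_exp_pos ℓ θ)

theorem sum_eq_one : ∑ b, logLinearPolicy ℓ θ b = 1 := by
  simp only [logLinearPolicy]
  rw [← Finset.sum_div, div_self (sum_exp_pos ℓ θ).ne']

theorem norm_sum_mul_le {c : ι → ℝ} {K : ℝ} (hc : ∀ b, ‖c b‖ ≤ K) :
    ‖∑ b, logLinearPolicy ℓ θ b * c b‖ ≤ K :=
  calc
    ‖∑ b, logLinearPolicy ℓ θ b * c b‖ ≤ ∑ b, logLinearPolicy ℓ θ b * K :=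
      norm_sum_le_of_le _ fun b _ =>
        norm_mul_le_of_le (Real.norm_of_nonneg (pos ℓ θ b).le).le (hc b)
    _ = K := by rw [← Finset.sum_mul, sum_eq_one, one_mul]

end Simplex

section Score

theorem score_apply :
    score ℓ θ a v = ℓ a v - ∑ b, logLinearPolicy ℓ θ b * ℓ b v := by
  simp [score]

theorem policyGradient_apply (c : ι → ℝ) :
    policyGradient ℓ θ c v = ∑ b, logLinearPolicy ℓ θ b * (c b * score ℓ θ b v) := by
  simp [policyGradient, mul_assoc]

variable [Nonempty ι]

theorem sum_mul_score_apply : ∑ b, logLinearPolicy ℓ θ b * score ℓ θ b v = 0 := by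
  simp only [score_apply, mul_sub]
  rw [Finset.sum_sub_distrib, ← Finset.sum_mul, sum_eq_one, one_mul, sub_self]

theorem policyGradient_sub_const (c : ι → ℝ) (K : ℝ) :
    policyGradient ℓ θ (fun b => c b - K) = policyGradient ℓ θ c := by
  ext v
  have hbaseline : ∑ b, logLinearPolicy ℓ θ b * (K * score ℓ θ b v) = 0 := by
    simp only [mul_left_comm _ K]
    rw [← Finset.mul_sum, sum_mul_score_apply, mul_zero]
  simp only [policyGradient_apply, sub_mul, mul_sub]
  rw [Finset.sum_sub_distrib, hbaseline, sub_zero]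

theorem fisherInformation_eq_policyGradient :
    fisherInformation ℓ θ v = policyGradient ℓ θ fun b => ℓ b v := by
  simp only [fisherInformation, score_apply]
  exact policyGradient_sub_const ℓ θ _ _

end Score

section Derivatives

variable [Nonempty ι]

theorem hasFDerivAt_log_sum_exp :
    HasFDerivAt (fun θ' => Real.log (∑ b, Real.exp (ℓ b θ')))
      (∑ b, logLinearPolicy ℓ θ b • ℓ b) θ := by
  have hsum : HasFDerivAt (fun θ' => ∑ b, Real.exp (ℓ b θ')) (∑ b, Real.exp (ℓ b θ) • ℓ b) θ :=
    HasFDerivAt.fun_sum fun b _ => (ℓ b).hasFDerivAt.exp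
  refine (hsum.log (sum_exp_pos ℓ θ).ne').congr_fderiv ?_
  simp only [Finset.smul_sum, smul_smul, logLinearPolicy, div_eq_inv_mul]

theorem eq_exp_sub_log_sum_exp :
    logLinearPolicy ℓ θ a = Real.exp (ℓ a θ - Real.log (∑ b, Real.exp (ℓ b θ))) := by
  rw [Real.exp_sub, Real.exp_log (sum_exp_pos ℓ θ), logLinearPolicy]

theorem hasFDerivAt :
    HasFDerivAt (fun θ' => logLinearPolicy ℓ θ' a) (logLinearPolicy ℓ θ a • score ℓ θ a) θ := by
  have hexp := ((ℓ a).hasFDerivAt.sub (hasFDerivAt_log_sum_exp ℓ θ)).exp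
  simpa only [score, Pi.sub_apply, ← eq_exp_sub_log_sum_exp] using hexp

theorem hasFDerivAt_sum_mul (c : ι → ℝ) :
    HasFDerivAt (fun θ' => ∑ b, logLinearPolicy ℓ θ' b * c b) (policyGradient ℓ θ c) θ := by
  have hsum := HasFDerivAt.fun_sum (u := Finset.univ) fun b _ =>
    (hasFDerivAt ℓ θ b).mul_const (c b)
  refine hsum.congr_fderiv (Finset.sum_congr rfl fun b _ => ?_)
  rw [smul_smul, mul_comm]

theorem hasFDerivAt_score_apply :
    HasFDerivAt (fun θ' => score ℓ θ' a v) (-fisherInformation ℓ θ v) θ := by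
  simp only [score_apply, fisherInformation_eq_policyGradient]
  exact (hasFDerivAt_sum_mul ℓ θ fun b => ℓ b v).const_sub (ℓ a v)

theorem hasFDerivAt_fisherInformation_apply :
    HasFDerivAt (fun θ' => fisherInformation ℓ θ' v w) (thirdCumulant ℓ θ v w) θ := by
  have hsum := HasFDerivAt.fun_sum (u := Finset.univ) fun b _ =>
    (hasFDerivAt ℓ θ b).mul
      ((hasFDerivAt_score_apply ℓ θ v b).mul (hasFDerivAt_score_apply ℓ θ w b))
  simp only [fisherInformation, policyGradient_apply]
  refine hsum.congr_fderiv ?_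
  ext u
  -- The scores are centered, so differentiating them inside the expectation contributes nothing.
  have hv : ∑ b, logLinearPolicy ℓ θ b * score ℓ θ b v * fisherInformation ℓ θ w u = 0 := by
    rw [← Finset.sum_mul, sum_mul_score_apply, zero_mul]
  have hw : ∑ b, logLinearPolicy ℓ θ b * score ℓ θ b w * fisherInformation ℓ θ v u = 0 := by
    rw [← Finset.sum_mul, sum_mul_score_apply, zero_mul]
  calc
    _ = ∑ b, (logLinearPolicy ℓ θ b * (score ℓ θ b v * score ℓ θ b w * score ℓ θ b u) -
          logLinearPolicy ℓ θ b * score ℓ θ b v * fisherInformation ℓ θ w u -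
          logLinearPolicy ℓ θ b * score ℓ θ b w * fisherInformation ℓ θ v u) := by
      simp only [Pi.mul_apply, sum_apply, add_apply, smul_apply, neg_apply, smul_eq_mul]
      exact Finset.sum_congr rfl fun b _ => by ring
    _ = thirdCumulant ℓ θ v w u := by
      rw [Finset.sum_sub_distrib, Finset.sum_sub_distrib, hv, hw, sub_zero, sub_zero,
        thirdCumulant, policyGradient_apply]

theorem contDiff {n : WithTop ℕ∞} : ContDiff ℝ n fun θ' => logLinearPolicy ℓ θ' a := by
  unfold logLinearPolicy
  exact ContDiff.div (by fun_prop) (by fun_prop) fun θ' => (sum_exp_pos ℓ θ').ne'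

theorem differentiableAt_iteratedFDeriv (n : ℕ) :
    DifferentiableAt ℝ (iteratedFDeriv ℝ n fun θ' => logLinearPolicy ℓ θ' a) θ :=
  (contDiff ℓ a).differentiable_iteratedFDeriv (WithTop.coe_lt_top _) θ

theorem iteratedFDeriv_one_apply :
    iteratedFDeriv ℝ 1 (fun θ' => logLinearPolicy ℓ θ' a) θ ![w] =
      logLinearPolicy ℓ θ a * score ℓ θ a w :=
  iteratedFDeriv_succ_apply_vecCons (differentiableAt_iteratedFDeriv ℓ θ a 0)
    (fun _ => iteratedFDeriv_zero_apply _) (hasFDerivAt ℓ θ a) w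

theorem iteratedFDeriv_two_apply :
    iteratedFDeriv ℝ 2 (fun θ' => logLinearPolicy ℓ θ' a) θ ![v, w] =
      logLinearPolicy ℓ θ a *
        (score ℓ θ a v * score ℓ θ a w - fisherInformation ℓ θ w v) := by
  rw [iteratedFDeriv_succ_apply_vecCons (differentiableAt_iteratedFDeriv ℓ θ a 1)
    (fun θ' => iteratedFDeriv_one_apply ℓ θ' w a)
    ((hasFDerivAt ℓ θ a).mul (hasFDerivAt_score_apply ℓ θ w a))]
  simp only [add_apply, smul_apply, neg_apply, smul_eq_mul]
  ring

theorem iteratedFDeriv_three_apply :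
    iteratedFDeriv ℝ 3 (fun θ' => logLinearPolicy ℓ θ' a) θ ![u, v, w] =
      logLinearPolicy ℓ θ a *
        (score ℓ θ a u * score ℓ θ a v * score ℓ θ a w -
          score ℓ θ a u * fisherInformation ℓ θ w v -
          score ℓ θ a v * fisherInformation ℓ θ w u -
          score ℓ θ a w * fisherInformation ℓ θ v u - thirdCumulant ℓ θ w v u) := by
  rw [iteratedFDeriv_succ_apply_vecCons (differentiableAt_iteratedFDeriv ℓ θ a 2)
    (fun θ' => iteratedFDeriv_two_apply ℓ θ' v w a)
    ((hasFDerivAt ℓ θ a).mul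
      (((hasFDerivAt_score_apply ℓ θ v a).mul (hasFDerivAt_score_apply ℓ θ w a)).sub
        (hasFDerivAt_fisherInformation_apply ℓ θ w v)))]
  simp only [add_apply, sub_apply, smul_apply, neg_apply, smul_eq_mul]
  ring

end Derivatives

section Bounds

variable [Nonempty ι] {ℓ θ u v w} {U V W : ℝ}

theorem norm_score_apply_le (hu : ∀ b, ‖ℓ b u‖ ≤ U) : ‖score ℓ θ a u‖ ≤ 2 * U := by
  rw [score_apply, two_mul]
  exact norm_sub_le_of_le (hu a) (norm_sum_mul_le ℓ θ hu)

theorem norm_policyGradient_apply_le {c : ι → ℝ} {K : ℝ} (hc : ∀ b, ‖c b‖ ≤ K)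
    (hu : ∀ b, ‖score ℓ θ b u‖ ≤ U) : ‖policyGradient ℓ θ c u‖ ≤ K * U := by
  rw [policyGradient_apply]
  exact norm_sum_mul_le ℓ θ fun b => norm_mul_le_of_le (hc b) (hu b)

theorem norm_iteratedFDeriv_three_apply_le (hu : ∀ b, ‖score ℓ θ b u‖ ≤ U)
    (hv : ∀ b, ‖score ℓ θ b v‖ ≤ V) (hw : ∀ b, ‖score ℓ θ b w‖ ≤ W) :
    ‖iteratedFDeriv ℝ 3 (fun θ' => logLinearPolicy ℓ θ' a) θ ![u, v, w]‖ ≤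
      5 * logLinearPolicy ℓ θ a * U * V * W := by
  have hfisher_wv : ‖fisherInformation ℓ θ w v‖ ≤ W * V := norm_policyGradient_apply_le hw hv
  have hfisher_wu : ‖fisherInformation ℓ θ w u‖ ≤ W * U := norm_policyGradient_apply_le hw hu
  have hfisher_vu : ‖fisherInformation ℓ θ v u‖ ≤ V * U := norm_policyGradient_apply_le hv hu
  have hcumulant : ‖thirdCumulant ℓ θ w v u‖ ≤ W * V * U :=
    norm_policyGradient_apply_le (fun b => norm_mul_le_of_le (hw b) (hv b)) hu
  rw [iteratedFDeriv_three_apply, norm_mul, Real.norm_of_nonneg (pos ℓ θ a).le]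
  calc
    _ ≤ logLinearPolicy ℓ θ a *
        (U * V * W + U * (W * V) + V * (W * U) + W * (V * U) + W * V * U) := by
      refine mul_le_mul_of_nonneg_left ?_ (pos ℓ θ a).le
      exact norm_sub_le_of_le (norm_sub_le_of_le (norm_sub_le_of_le (norm_sub_le_of_le
        (norm_mul_le_of_le (norm_mul_le_of_le (hu a) (hv a)) (hw a))
        (norm_mul_le_of_le (hu a) hfisher_wv)) (norm_mul_le_of_le (hv a) hfisher_wu))
        (norm_mul_le_of_le (hw a) hfisher_vu)) hcumulant
    _ = 5 * logLinearPolicy ℓ θ a * U * V * W := by ring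

end Bounds

end logLinearPolicy

theorem stmt5_general {ι E : Type*} [Fintype ι] [Nonempty ι] [NormedAddCommGroup E]
    [NormedSpace ℝ E] (ℓ : ι → E →L[ℝ] ℝ) (θ : E) {u v w : E} {U V W : ℝ}
    (hu : ∀ b, ‖ℓ b u‖ ≤ U) (hv : ∀ b, ‖ℓ b v‖ ≤ V) (hw : ∀ b, ‖ℓ b w‖ ≤ W) (a : ι) :
    ‖iteratedFDeriv ℝ 3 (fun θ' => logLinearPolicy ℓ θ' a) θ ![u, v, w]‖ ≤
      40 * logLinearPolicy ℓ θ a * U * V * W :=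
  calc
    _ ≤ 5 * logLinearPolicy ℓ θ a * (2 * U) * (2 * V) * (2 * W) :=
      logLinearPolicy.norm_iteratedFDeriv_three_apply_le a
        (fun b => logLinearPolicy.norm_score_apply_le b hu)
        (fun b => logLinearPolicy.norm_score_apply_le b hv)
        (fun b => logLinearPolicy.norm_score_apply_le b hw)
    _ = 40 * logLinearPolicy ℓ θ a * U * V * W := by ring

theorem softmax_eq_logLinearPolicy {S A : Type*} [Fintype S] [Fintype A] (θ : S × A → ℝ) (s : S)
    (a : A) : softmax θ s a = logLinearPolicy (fun b => .proj (R := ℝ) (s, b)) θ a :=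
  rfl

/-- Bound for the third directional derivative of the softmax policy.
The sup norm `‖u‖_∞` is the norm of the Pi type `S × A → ℝ`. -/
theorem stmt5 {S A : Type*} [Fintype S] [Fintype A] [Nonempty S] [Nonempty A]
    (θ u v w : S × A → ℝ) (s : S) (a : A) :
    |iteratedFDeriv ℝ 3 (fun θ' => softmax θ' s a) θ ![u, v, w]| ≤
      48 * softmax θ s a * ‖u‖ * ‖v‖ * ‖w‖ := by
  simp only [← Real.norm_eq_abs, softmax_eq_logLinearPolicy]
  have hpos := logLinearPolicy.pos (fun b => .proj (R := ℝ) (s, b)) θ a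
  refine (stmt5_general _ θ (fun b => norm_le_pi_norm u (s, b)) (fun b => norm_le_pi_norm v (s, b))
    (fun b => norm_le_pi_norm w (s, b)) a).trans ?_
  gcongr
  norm_num
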